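/- Collision reduction for the constant-local hash: fix integers k, n, μ ≥ 1, a real β with 0 < β ≤ 1, a matrix M ∈ F_2^{μ×n}, and an injective map Exp : F_2^k → F_2^n such that wt(Exp(x)) ≤ βn/2 for every x ∈ F_2^k. Define H_M(x, r, s) = RE_M(Exp(x); r, s). Suppose H_M(x, r, s) = H_M(x', r', s'). Then: (i) if x ≠ x', the vector v = Exp(x) ⊕ Exp(x') is nonzero, satisfies Mv = 0, and has Hamming weight wt(v) ≤ βn; and (ii) if x = x', then r = r' and s = s'. In particular, any nontrivial collision of H_M yields a nonzero vector of Hamming weight at most βn in the kernel of M. -/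

import Mathlib

open Finset

/-- Boundary-extended horizontal mask: `sBext m s i k` is the 1-based `s_{i,k}`
for `k ∈ {1,…,m-1}`, with the boundary convention `s_{i,0} = s_{i,m} = 0`. -/
def sBext (m : ℕ) {q : ℕ} (s : Fin q → Fin (m - 1) → ZMod 2) (i : Fin q) (k : ℕ) :
    ZMod 2 :=
  if h : 1 ≤ k ∧ k ≤ m - 1 then s i ⟨k - 1, by omega⟩ else 0

/-- `REw x r j i` is the output bit `w_{j+1,i}` (1-based column `j+1`, `w`-index
`i ∈ {0,…,q-1}`): `w_{j,0} = x_j ⊕ r_{j,1}` and `w_{j,i} = r_{j,i} ⊕ r_{j,i+1}`;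
here `r j i` denotes `r_{j+1,i+1}` in the 1-based notation. -/
def REw {m q : ℕ} (x : Fin m → ZMod 2) (r : Fin m → Fin q → ZMod 2) :
    Fin m → Fin q → ZMod 2 :=
  fun j i =>
    (if (i : ℕ) = 0 then x j
      else r j ⟨(i : ℕ) - 1, Nat.lt_of_le_of_lt (Nat.sub_le _ _) i.isLt⟩) + r j i

/-- `REz M r s i j` is the output bit `z_{i+1,j+1}` (1-based):
`z_{i,j} = s_{i,j-1} ⊕ s_{i,j} ⊕ M_{i,j}·r_{j,i}`. -/
def REz {m q : ℕ} (M : Fin q → Fin m → ZMod 2) (r : Fin m → Fin q → ZMod 2)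
    (s : Fin q → Fin (m - 1) → ZMod 2) : Fin q → Fin m → ZMod 2 :=
  fun i j => sBext m s i (j : ℕ) + sBext m s i ((j : ℕ) + 1) + M i j * r j i

/-- `aFun w j i = w_{j,0} ⊕ ⋯ ⊕ w_{j,i}` (0-based `i : Fin q`), i.e. the prefix
parity `a_{j,i+1}` in the 1-based notation of the paper. -/
def aFun {m q : ℕ} (w : Fin m → Fin q → ZMod 2) (j : Fin m) (i : Fin q) : ZMod 2 :=
  ∑ k ∈ Finset.Iic i, w j k

/-- Hamming weight of a vector over `F_2`. -/
def hammingWt {n : ℕ} (v : Fin n → ZMod 2) : ℕ :=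
  (Finset.univ.filter fun j => v j ≠ 0).card

/-!
The encoding can be decoded. The parity of `w_{j,0}, …, w_{j,i-1}` telescopes to `x_j ⊕ r_{j,i}`,
and the parity of the first `k` entries of row `i` of `z`, corrected by the bits `M_{i,j}·r_{j,i}`,
telescopes to `s_{i,k}`. For `k = n` the boundary convention gives `s_{i,n} = 0`, so `M x` is a
function of the output alone: colliding inputs differ by a kernel vector, and its weight is bounded
by the triangle inequality. If the inputs agree, the first parities determine `r`, and then the
second ones determine `s`.
-/

section Encoding

variable {m q : ℕ}

theorem sBext_zero (s : Fin q → Fin (m - 1) → ZMod 2) (i : Fin q) : sBext m s i 0 = 0 :=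
  dif_neg (by omega)

theorem sBext_self (s : Fin q → Fin (m - 1) → ZMod 2) (i : Fin q) : sBext m s i m = 0 :=
  dif_neg (by omega)

theorem sBext_val_add_one (s : Fin q → Fin (m - 1) → ZMod 2) (i : Fin q) (t : Fin (m - 1)) :
    sBext m s i (t + 1) = s i t :=
  dif_pos (by omega)

theorem aFun_zero (w : Fin m → Fin q → ZMod 2) (j : Fin m) (h : 0 < q) :
    aFun w j ⟨0, h⟩ = w j ⟨0, h⟩ := by
  have hIic : Iic (⟨0, h⟩ : Fin q) = {⟨0, h⟩} := by
    ext a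
    simp [Fin.le_def, Fin.ext_iff]
  rw [aFun, hIic, sum_singleton]

theorem aFun_succ (w : Fin m → Fin q → ZMod 2) (j : Fin m) {k : ℕ} (h : k + 1 < q) :
    aFun w j ⟨k + 1, h⟩ = aFun w j ⟨k, k.lt_succ_self.trans h⟩ + w j ⟨k + 1, h⟩ := by
  have hIic : Iic (⟨k + 1, h⟩ : Fin q) =
      insert ⟨k + 1, h⟩ (Iic ⟨k, k.lt_succ_self.trans h⟩) := by
    ext a
    simp only [mem_Iic, mem_insert, Fin.le_def, Fin.ext_iff]
    omega
  rw [aFun, aFun, hIic, sum_insert (by simp [Fin.le_def]), add_comm]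

theorem aFun_REw (x : Fin m → ZMod 2) (r : Fin m → Fin q → ZMod 2) (j : Fin m) (i : Fin q) :
    aFun (REw x r) j i = x j + r j i := by
  obtain ⟨i, hi⟩ := i
  induction i with
  | zero => simp [aFun_zero, REw]
  | succ k ih => simp [aFun_succ, ih, REw, add_assoc, CharTwo.add_cancel_left]

theorem REw_injective (x : Fin m → ZMod 2) :
    Function.Injective (REw x : (Fin m → Fin q → ZMod 2) → _) := by
  intro r r' h
  funext j i
  have hparity : x j + r j i = x j + r' j i := by rw [← aFun_REw, ← aFun_REw, h]
  exact add_left_cancel hparity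

theorem sum_REz_add_mul (M : Fin q → Fin m → ZMod 2) (r : Fin m → Fin q → ZMod 2)
    (s : Fin q → Fin (m - 1) → ZMod 2) (i : Fin q) {k : ℕ} (hk : k ≤ m) :
    ∑ j : Fin k, (REz M r s i (j.castLE hk) + M i (j.castLE hk) * r (j.castLE hk) i) =
      sBext m s i k := by
  calc
    _ = ∑ j : Fin k, (sBext m s i (j + 1) - sBext m s i j) :=
      sum_congr rfl fun j _ => by
        rw [REz, CharTwo.add_cancel_right, CharTwo.sub_eq_add, add_comm, Fin.val_castLE]
    _ = ∑ j ∈ range k, (sBext m s i (j + 1) - sBext m s i j) := by rw [sum_range]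
    _ = sBext m s i k := by rw [sum_range_sub, sBext_zero, sub_zero]

theorem REz_injective (M : Fin q → Fin m → ZMod 2) (r : Fin m → Fin q → ZMod 2) :
    Function.Injective (REz M r) := by
  intro s s' h
  funext i t
  have ht : (t : ℕ) + 1 ≤ m := by omega
  rw [← sBext_val_add_one s, ← sBext_val_add_one s', ← sum_REz_add_mul M r s i ht,
    ← sum_REz_add_mul M r s' i ht, h]

theorem sum_mul_eq_sum_REz_add_mul_aFun (M : Fin q → Fin m → ZMod 2) (x : Fin m → ZMod 2)
    (r : Fin m → Fin q → ZMod 2) (s : Fin q → Fin (m - 1) → ZMod 2) (i : Fin q) :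
    ∑ j, M i j * x j = ∑ j, (REz M r s i j + M i j * aFun (REw x r) j i) := by
  have hrow : ∑ j, (REz M r s i j + M i j * r j i) = 0 :=
    (sum_REz_add_mul M r s i le_rfl).trans (sBext_self s i)
  calc
    ∑ j, M i j * x j = ∑ j, (REz M r s i j + M i j * r j i) + ∑ j, M i j * x j := by
      rw [hrow, zero_add]
    _ = ∑ j, (REz M r s i j + M i j * aFun (REw x r) j i) := by
      rw [← sum_add_distrib]
      exact sum_congr rfl fun j _ => by rw [aFun_REw]; ring

theorem sum_mul_add_eq_zero_of_REw_eq_of_REz_eq (M : Fin q → Fin m → ZMod 2)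
    {x x' : Fin m → ZMod 2} {r r' : Fin m → Fin q → ZMod 2}
    {s s' : Fin q → Fin (m - 1) → ZMod 2} (hw : REw x r = REw x' r')
    (hz : REz M r s = REz M r' s') (i : Fin q) : ∑ j, M i j * (x j + x' j) = 0 := by
  simp only [mul_add, sum_add_distrib]
  rw [sum_mul_eq_sum_REz_add_mul_aFun M x r s, sum_mul_eq_sum_REz_add_mul_aFun M x' r' s', hw, hz,
    CharTwo.add_self_eq_zero]

end Encoding

theorem hammingWt_add_le {n : ℕ} (u v : Fin n → ZMod 2) :
    hammingWt (u + v) ≤ hammingWt u + hammingWt v := by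
  have htriangle := hammingDist_triangle u 0 (-v)
  simpa [hammingDist_eq_hammingNorm, hammingWt, hammingNorm] using htriangle

theorem hash_collision_reduction_general {α : Type*} {n mu : ℕ} (β : ℝ)
    (M : Fin mu → Fin n → ZMod 2) (Exp : α → Fin n → ZMod 2) (hExpInj : Function.Injective Exp)
    (hExpWt : ∀ x : α, (hammingWt (Exp x) : ℝ) ≤ β * n / 2) (x x' : α)
    (r r' : Fin n → Fin mu → ZMod 2) (s s' : Fin mu → Fin (n - 1) → ZMod 2)
    (hcol : (REw (Exp x) r, REz M r s) = (REw (Exp x') r', REz M r' s')) :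
    (x ≠ x' →
        (fun j => Exp x j + Exp x' j) ≠ (0 : Fin n → ZMod 2) ∧
        (∀ i : Fin mu, ∑ j, M i j * (Exp x j + Exp x' j) = 0) ∧
        (hammingWt (fun j => Exp x j + Exp x' j) : ℝ) ≤ β * n) ∧
      (x = x' → r = r' ∧ s = s') := by
  obtain ⟨hw, hz⟩ := Prod.mk.inj hcol
  refine ⟨fun hne => ⟨fun hzero => ?_, sum_mul_add_eq_zero_of_REw_eq_of_REz_eq M hw hz, ?_⟩, ?_⟩
  · exact hne (hExpInj (funext fun j => CharTwo.add_eq_zero.1 (congrFun hzero j)))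
  · calc
      (hammingWt (Exp x + Exp x') : ℝ) ≤ hammingWt (Exp x) + hammingWt (Exp x') :=
        mod_cast hammingWt_add_le (Exp x) (Exp x')
      _ ≤ β * n / 2 + β * n / 2 := add_le_add (hExpWt x) (hExpWt x')
      _ = β * n := add_halves _
  · rintro rfl
    obtain rfl := REw_injective _ hw
    exact ⟨rfl, REz_injective M r hz⟩

/-- Collision reduction for the constant-local hash
`H_M(x, r, s) = RE_M(Exp(x); r, s)`: if `H_M(x, r, s) = H_M(x', r', s')`, then
(i) if `x ≠ x'` the vector `v = Exp(x) ⊕ Exp(x')` is nonzero, lies in the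
kernel of `M`, and has Hamming weight at most `βn`; and (ii) if `x = x'` then
`r = r'` and `s = s'`. -/
theorem hash_collision_reduction {k n mu : ℕ} (hk : 1 ≤ k) (hn : 1 ≤ n)
    (hmu : 1 ≤ mu) (β : ℝ) (hβ0 : 0 < β) (hβ1 : β ≤ 1)
    (M : Fin mu → Fin n → ZMod 2)
    (Exp : (Fin k → ZMod 2) → (Fin n → ZMod 2))
    (hExpInj : Function.Injective Exp)
    (hExpWt : ∀ x : Fin k → ZMod 2, (hammingWt (Exp x) : ℝ) ≤ β * n / 2)
    (x x' : Fin k → ZMod 2) (r r' : Fin n → Fin mu → ZMod 2)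
    (s s' : Fin mu → Fin (n - 1) → ZMod 2)
    (hcol : (REw (Exp x) r, REz M r s) = (REw (Exp x') r', REz M r' s')) :
    (x ≠ x' →
        (fun j => Exp x j + Exp x' j) ≠ (0 : Fin n → ZMod 2) ∧
        (∀ i : Fin mu, ∑ j, M i j * (Exp x j + Exp x' j) = 0) ∧
        (hammingWt (fun j => Exp x j + Exp x' j) : ℝ) ≤ β * n) ∧
      (x = x' → r = r' ∧ s = s') :=
  hash_collision_reduction_general β M Exp hExpInj hExpWt x x' r r' s s' hcol
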